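/- For every element h ∈ G, the conjugate subgroup h(Π ∩ G₀)h⁻¹ is contained in Π. In particular, h(Π ∩ G₀)h⁻¹ = Π ∩ G₀ for every h ∈ G₀. -/

import Mathlib

/-- Generators of the Cartwright–Steger lattice presentation. -/
inductive CSgen : Type
  | u : CSgen
  | v : CSgen
  | b : CSgen

open FreeGroup in
/-- Relators of the Cartwright–Steger lattice:
`u³ = v⁴ = b³ = 1`, `(uv)² = (vu)²`, `vb = bv`, `(buv)³ = 1`, `(buvu)²v = 1`. -/
def csRels : Set (FreeGroup CSgen) :=
  { (of CSgen.u) ^ 3,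
    (of CSgen.v) ^ 4,
    (of CSgen.b) ^ 3,
    (of CSgen.u * of CSgen.v) ^ 2 * ((of CSgen.v * of CSgen.u) ^ 2)⁻¹,
    of CSgen.v * of CSgen.b * (of CSgen.b * of CSgen.v)⁻¹,
    (of CSgen.b * of CSgen.u * of CSgen.v) ^ 3,
    (of CSgen.b * of CSgen.u * of CSgen.v * of CSgen.u) ^ 2 * of CSgen.v }

/-- The Cartwright–Steger lattice, as an abstract presented group. -/
abbrev CS : Type := PresentedGroup csRels

def gu : CS := PresentedGroup.of CSgen.u
def gv : CS := PresentedGroup.of CSgen.v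
def gb : CS := PresentedGroup.of CSgen.b
/-- `j = (uv)²`. -/
def gj : CS := (gu * gv) ^ 2

/-- `a₁ = vuv⁻¹j⁴buvj²`. -/
def a1 : CS := gv * gu * gv⁻¹ * gj ^ 4 * gb * gu * gv * gj ^ 2
/-- `a₂ = v²ubuv⁻¹uv²j`. -/
def a2 : CS := gv ^ 2 * gu * gb * gu * gv⁻¹ * gu * gv ^ 2 * gj
/-- `a₃ = u⁻¹v²uj⁹bv⁻¹uv⁻¹j⁸`. -/
def a3 : CS := gu⁻¹ * gv ^ 2 * gu * gj ^ 9 * gb * gv⁻¹ * gu * gv⁻¹ * gj ^ 8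

/-- The subgroup `Π` generated by `a₁`, `a₂`, `a₃`. -/
def PiGrp : Subgroup CS := Subgroup.closure {a1, a2, a3}

lemma a1_mem : a1 ∈ PiGrp := Subgroup.subset_closure (Set.mem_insert _ _)
lemma a2_mem : a2 ∈ PiGrp :=
  Subgroup.subset_closure (Set.mem_insert_of_mem _ (Set.mem_insert _ _))
lemma a3_mem : a3 ∈ PiGrp :=
  Subgroup.subset_closure (Set.mem_insert_of_mem _ (Set.mem_insert_of_mem _ (Set.mem_singleton _)))

/-- The subgroup `G₀` generated by `(jb)⁻¹`, `b`, `j` and `v`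
(the stabilizer of the mirror `M₀`). -/
def G0 : Subgroup CS := Subgroup.closure {(gj * gb)⁻¹, gb, gj, gv}

lemma G0_mem_s2 : (gj * gb)⁻¹ ∈ G0 := Subgroup.subset_closure (Set.mem_insert _ _)
lemma G0_mem_b : gb ∈ G0 :=
  Subgroup.subset_closure (Set.mem_insert_of_mem _ (Set.mem_insert _ _))
lemma G0_mem_j : gj ∈ G0 :=
  Subgroup.subset_closure
    (Set.mem_insert_of_mem _ (Set.mem_insert_of_mem _ (Set.mem_insert _ _)))
lemma G0_mem_v : gv ∈ G0 :=
  Subgroup.subset_closure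
    (Set.mem_insert_of_mem _ (Set.mem_insert_of_mem _
      (Set.mem_insert_of_mem _ (Set.mem_singleton _))))

/-!
The lattice `G` acts on the 28 isotropic points of a hermitian plane over `𝔽₉`, with image
`PSU(3, 3)`; together with the abelianization `G → ℤ/3` this gives a finite quotient `φ` of `G` in
which `Π` is the full preimage of the stabilizer of a set of points. One inclusion is read off the
generators. For the other, a coset enumeration shows that explicit words represent all cosets of
`Π`, and only the trivial word stabilizes the set. Hence `ker φ ≤ Π`, so the normal core of `Π`
contains `ker φ`.

On the other hand `v` is central in `G₀`, while `φ Π` is the Frobenius group `ℤ/7 ⋊ ℤ/3`, in which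
only the identity commutes with `φ v`. Thus `Π ∩ G₀ ≤ ker φ` lies in the normal core of `Π`.
-/

open MulAction Pointwise

/-! ### Subgroups, cosets and normal cores -/

section

variable {G : Type*} [Group G]

lemma closure_le_stabilizer_of_mapsTo {X : Type*} [MulAction G X] {S : Set G} {T : Set X}
    (hT : T.Finite) (hS : ∀ s ∈ S, Set.MapsTo (s • ·) T T) :
    Subgroup.closure S ≤ stabilizer G T :=
  (Subgroup.closure_le _).mpr fun s hs =>
    (mem_stabilizer_set_iff_smul_set_subset hT).mpr (hS s hs).image_subset

lemma eq_univ_of_mapsTo_smul {X : Type*} [MulAction G X] [IsPretransitive G X]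
    {S : Set G} (hG : Subgroup.closure S = ⊤) {T : Set X} (hT : T.Finite) (hne : T.Nonempty)
    (hS : ∀ s ∈ S, Set.MapsTo (s • ·) T T) : T = Set.univ := by
  obtain ⟨x, hx⟩ := hne
  refine Set.eq_univ_of_forall fun y => ?_
  obtain ⟨g, rfl⟩ := exists_smul_eq G x y
  have hg : g • T = T := closure_le_stabilizer_of_mapsTo hT hS (hG ▸ Subgroup.mem_top g)
  exact hg ▸ Set.smul_mem_smul_set hx

lemma le_of_forall_rep_mem {ι : Type*} {H L : Subgroup G} (hHL : H ≤ L) {rep : ι → G}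
    (hrep : Set.range (fun i => (rep i : G ⧸ H)) = Set.univ)
    (hL : ∀ i, rep i ∈ L → rep i ∈ H) : L ≤ H := by
  intro g hg
  obtain ⟨i, hi⟩ := hrep.ge (Set.mem_univ (g : G ⧸ H))
  have hig : (rep i)⁻¹ * g ∈ H := QuotientGroup.eq.mp hi
  have hiL : rep i ∈ L := by simpa using mul_mem hg (inv_mem (hHL hig))
  simpa using mul_mem (hL i hiL) hig

lemma pow_val_ofNat {M : Type*} [Monoid M] {x : M} {n : ℕ} [NeZero n] (hx : x ^ n = 1) (k : ℕ) :
    x ^ (Fin.ofNat n k : ℕ) = x ^ k :=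
  (pow_eq_pow_mod k hx).symm

lemma pow_val_add {M : Type*} [Monoid M] {x : M} {n : ℕ} (hx : x ^ n = 1) (a b : Fin n) :
    x ^ ((a + b : Fin n) : ℕ) = x ^ (a : ℕ) * x ^ (b : ℕ) := by
  rw [Fin.val_add, ← pow_eq_pow_mod _ hx, pow_add]

lemma exists_eq_pow_mul_pow_of_mem_closure {c d : G} {m n r : ℕ} [NeZero m] [NeZero n]
    (hc : c ^ m = 1) (hd : d ^ n = 1) (hcd : SemiconjBy d c (c ^ r)) {g : G}
    (hg : g ∈ Subgroup.closure {c, d}) :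
    ∃ (i : Fin m) (k : Fin n), g = c ^ (i : ℕ) * d ^ (k : ℕ) := by
  let T : Set G := Set.range fun p : Fin m × Fin n => c ^ (p.1 : ℕ) * d ^ (p.2 : ℕ)
  have pow_mem (i k : ℕ) : c ^ i * d ^ k ∈ T :=
    ⟨(Fin.ofNat m i, Fin.ofNat n k), by simp only [pow_val_ofNat hc, pow_val_ofNat hd]⟩
  have maps : ∀ s ∈ ({c, d} : Set G), Set.MapsTo (s • ·) T T := by
    rintro _ (rfl | rfl) _ ⟨⟨i, k⟩, rfl⟩
    · simpa only [smul_eq_mul, ← mul_assoc, ← pow_succ'] using pow_mem (i + 1) k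
    · have := pow_mem (r * i) (k + 1)
      rwa [pow_mul, pow_succ', ← mul_assoc, ← (hcd.pow_right i).eq, mul_assoc] at this
  have hgT : g • T = T := closure_le_stabilizer_of_mapsTo (Set.finite_range _) maps hg
  have : g ∈ T := hgT ▸ ⟨1, by simpa using pow_mem 0 0, mul_one g⟩
  obtain ⟨⟨i, k⟩, h⟩ := this
  exact ⟨i, k, h.symm⟩

lemma map_conj_le_of_le_normalCore {H K : Subgroup G} (hK : K ≤ H.normalCore) (g : G) :
    K.map (MulAut.conj g).toMonoidHom ≤ H :=
  calc K.map (MulAut.conj g).toMonoidHom ≤ H.normalCore.map (MulAut.conj g).toMonoidHom :=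
        Subgroup.map_mono hK
    _ = H.normalCore := Subgroup.Normal.map_conj_eq _ _
    _ ≤ H := H.normalCore_le

lemma map_conj_inf_eq_of_le_normalCore {H K : Subgroup G} (hK : H ⊓ K ≤ H.normalCore) {g : G}
    (hg : g ∈ K) : (H ⊓ K).map (MulAut.conj g).toMonoidHom = H ⊓ K := by
  have hcore : H ⊓ K = H.normalCore ⊓ K :=
    le_antisymm (le_inf hK inf_le_right) (inf_le_inf_right K H.normalCore_le)
  rw [hcore, Subgroup.map_inf _ _ _ (MulAut.conj g).injective]
  exact congrArg₂ (· ⊓ ·) (Subgroup.Normal.map_conj_eq _ _) (Subgroup.conj_smul_eq_self_of_mem hg)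

end

/-! ### Normal forms in the reflection group `G₁₀` -/

/-- Left multiplication by `u` on the normal forms of `IsG10Triple`: the entry `(e', δ, k')` at
`(e, ε)` means `u v ^ e w ^ ε = v ^ e' w ^ (ε + δ) u ^ k'`. Since `w²` is central, the parity `ε` of
the exponent of `w` is all that matters. -/
def leftMulTable : Fin 4 → Fin 2 → Fin 4 × Fin 24 × Fin 3 :=
  ![![(0, 0, 1), (1, 1, 2)], ![(3, 22, 2), (2, 21, 1)],
    ![(3, 21, 1), (2, 16, 2)], ![(0, 1, 2), (1, 6, 1)]]

/-- The relations of the Shephard–Todd reflection group `G₁₀` (of order 288) between its two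
reflections `u` and `v`, with an auxiliary element `w` whose square is the central element
`(uv)⁻²`. Every element of the group has a normal form `v ^ e w ^ c u ^ k` with `e < 4`, `c < 24`
and `k < 3`. -/
structure IsG10Triple {G : Type*} [Group G] (u v w : G) : Prop where
  pow_three : u ^ 3 = 1
  pow_four : v ^ 4 = 1
  braid : u * v * u * v = v * u * v * u
  reverser_eq : w = u * v⁻¹ * u

namespace IsG10Triple

variable {G : Type*} [Group G] {u v w : G} (h : IsG10Triple u v w)

include h

lemma sq_left : u ^ 2 = u⁻¹ := by rw [eq_inv_iff_mul_eq_one, ← pow_succ, h.pow_three]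

lemma cube_right : v ^ 3 = v⁻¹ := by rw [eq_inv_iff_mul_eq_one, ← pow_succ, h.pow_four]

lemma reverser_sq : w ^ 2 = (v * u * v * u)⁻¹ :=
  calc w ^ 2 = u * v⁻¹ * u ^ 2 * v⁻¹ * u := by simp only [h.reverser_eq, pow_two, mul_assoc]
    _ = u * (u * v * u * v)⁻¹ * u⁻¹ * u ^ 3 := by rw [h.sq_left]; group
    _ = u * (v * u * v * u)⁻¹ * u⁻¹ := by rw [h.pow_three, h.braid, mul_one]
    _ = (u * v * u * v)⁻¹ := by group
    _ = (v * u * v * u)⁻¹ := by rw [h.braid]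

lemma commute_reverser_sq_left : Commute (w ^ 2) u := by
  rw [h.reverser_sq, Commute.inv_left_iff]
  calc v * u * v * u * u = u * v * u * v * u := by rw [h.braid]
    _ = u * (v * u * v * u) := by group

lemma commute_reverser_sq_right : Commute (w ^ 2) v := by
  rw [h.reverser_sq, Commute.inv_left_iff]
  calc v * u * v * u * v = v * (u * v * u * v) := by group
    _ = v * (v * u * v * u) := by rw [h.braid]

lemma mul_reverser_mul : v * w * v = (w ^ 5)⁻¹ :=
  calc v * w * v = v * u * v ^ 3 * u * v := by
        rw [h.reverser_eq, h.cube_right]; simp only [mul_assoc]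
    _ = (v * u * v * u) * (u * v⁻¹ * u)⁻¹ * (u * v * u * v) := by
        simp [pow_succ, mul_assoc]
    _ = (w ^ 2)⁻¹ * w⁻¹ * (w ^ 2)⁻¹ := by
        rw [h.reverser_sq, inv_inv, h.braid, h.reverser_eq]
    _ = (w ^ 5)⁻¹ := by group

lemma reverser_mul : w * v = v⁻¹ * (w ^ 5)⁻¹ := by
  rw [← h.mul_reverser_mul]; group

lemma reverser_mul_inv : w * v⁻¹ = v * w ^ 7 :=
  calc w * v⁻¹ = w ^ 2 * (v * (v * w * v)⁻¹) := by group
    _ = w ^ 2 * v * w ^ 5 := by rw [h.mul_reverser_mul]; group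
    _ = v * w ^ 7 := by rw [h.commute_reverser_sq_right.eq]; group

lemma reverser_pow : w ^ 24 = 1 := by
  have conj : w * v * w⁻¹ = v⁻¹ * (w ^ 6)⁻¹ := by rw [h.reverser_mul]; group
  have comm : Commute v⁻¹ (w ^ 6)⁻¹ := by
    simpa only [← pow_mul] using (h.commute_reverser_sq_right.pow_left 3).symm.inv_inv
  have : (w * v * w⁻¹) ^ 4 = (v ^ 4)⁻¹ * (w ^ 24)⁻¹ := by
    rw [conj, comm.mul_pow]; group
  rw [conj_pow, h.pow_four] at this
  simpa using this

lemma left_mul_right : u * v = v⁻¹ * (w ^ 2)⁻¹ * u⁻¹ := by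
  rw [h.reverser_sq]; group

lemma left_mul_right_sq : u * v ^ 2 = v⁻¹ * (w ^ 3)⁻¹ * u := by
  rw [pow_succ' w 2, mul_inv_rev, h.reverser_sq, h.reverser_eq]
  simp [pow_two, mul_assoc]

lemma left_mul_right_inv : u * v⁻¹ = w * u⁻¹ := by
  rw [h.reverser_eq]; group

lemma left_mul_reverser : u * w = v * w ^ 2 * u⁻¹ :=
  calc u * w = u ^ 2 * v⁻¹ * u := by rw [h.reverser_eq, pow_two]; simp only [mul_assoc]
    _ = v * w ^ 2 * u⁻¹ * u ^ 3 := by rw [h.reverser_sq, ← h.braid, h.sq_left]; group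
    _ = v * w ^ 2 * u⁻¹ := by rw [h.pow_three, mul_one]

lemma inv_pow_of_le {n : ℕ} (hn : n ≤ 24) : (w ^ n)⁻¹ = w ^ (24 - n) := by
  rw [inv_eq_iff_mul_eq_one, ← pow_add, Nat.add_sub_cancel' hn, h.reverser_pow]

lemma left_inv_mul_reverser : u⁻¹ * w = v⁻¹ * u := by
  rw [h.reverser_eq]; group

lemma left_mul_mul_reverser : u * (v * w) = (v ^ 2)⁻¹ * (w ^ 2)⁻¹ * u :=
  calc u * (v * w) = v⁻¹ * (w ^ 2)⁻¹ * (u⁻¹ * w) := by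
        rw [← mul_assoc, h.left_mul_right, mul_assoc]
    _ = v⁻¹ * ((w ^ 2)⁻¹ * v⁻¹) * u := by rw [h.left_inv_mul_reverser]; simp only [mul_assoc]
    _ = v⁻¹ * (v⁻¹ * (w ^ 2)⁻¹) * u := by rw [h.commute_reverser_sq_right.inv_inv.eq]
    _ = (v ^ 2)⁻¹ * (w ^ 2)⁻¹ * u := by rw [pow_two v, mul_inv_rev]; simp only [mul_assoc]

lemma left_mul_sq_mul_reverser : u * (v ^ 2 * w) = (v ^ 2)⁻¹ * (w ^ 7)⁻¹ * u⁻¹ := by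
  have hw : Commute (w ^ 4)⁻¹ v⁻¹ := by
    simpa only [← pow_mul] using (h.commute_reverser_sq_right.pow_left 2).inv_inv
  calc u * (v ^ 2 * w) = v⁻¹ * (w ^ 3)⁻¹ * (u * w) := by
        rw [← mul_assoc, h.left_mul_right_sq, mul_assoc]
    _ = v⁻¹ * (w ^ 4)⁻¹ * (w * v) * w ^ 2 * u⁻¹ := by rw [h.left_mul_reverser]; group
    _ = v⁻¹ * ((w ^ 4)⁻¹ * v⁻¹) * (w ^ 3)⁻¹ * u⁻¹ := by rw [h.reverser_mul]; group
    _ = (v ^ 2)⁻¹ * (w ^ 7)⁻¹ * u⁻¹ := by rw [hw.eq]; group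

lemma left_mul_inv_mul_reverser : u * (v⁻¹ * w) = v * w ^ 7 * u := by
  rw [← mul_assoc, h.left_mul_right_inv, mul_assoc, h.left_inv_mul_reverser, ← mul_assoc,
    h.reverser_mul_inv]

lemma left_mul_pow_mul_pow (e : Fin 4) (ε : Fin 2) :
    let t := leftMulTable e ε
    u * (v ^ (e : ℕ) * w ^ (ε : ℕ)) =
      v ^ (t.1 : ℕ) * w ^ (ε + t.2.1 : ℕ) * u ^ (t.2.2 : ℕ) := by
  have sq_right : v ^ 2 = (v ^ 2)⁻¹ := by rw [eq_inv_iff_mul_eq_one, ← pow_add, h.pow_four]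
  fin_cases e <;> fin_cases ε
  · change u * (v ^ 0 * w ^ 0) = v ^ 0 * w ^ 0 * u ^ 1
    simp only [pow_zero, one_mul, mul_one, pow_one]
  · change u * (v ^ 0 * w ^ 1) = v ^ 1 * w ^ 2 * u ^ 2
    rw [pow_zero, one_mul, pow_one, pow_one, h.left_mul_reverser, h.sq_left]
  · change u * (v ^ 1 * w ^ 0) = v ^ 3 * w ^ 22 * u ^ 2
    rw [pow_zero, mul_one, pow_one, h.left_mul_right, h.cube_right, h.sq_left,
      h.inv_pow_of_le (by norm_num)]
  · change u * (v ^ 1 * w ^ 1) = v ^ 2 * w ^ 22 * u ^ 1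
    rw [pow_one, pow_one, pow_one, h.left_mul_mul_reverser, ← sq_right,
      h.inv_pow_of_le (by norm_num)]
  · change u * (v ^ 2 * w ^ 0) = v ^ 3 * w ^ 21 * u ^ 1
    rw [pow_zero, mul_one, pow_one, h.left_mul_right_sq, h.cube_right,
      h.inv_pow_of_le (by norm_num)]
  · change u * (v ^ 2 * w ^ 1) = v ^ 2 * w ^ 17 * u ^ 2
    rw [pow_one, h.left_mul_sq_mul_reverser, ← sq_right, h.inv_pow_of_le (by norm_num), h.sq_left]
  · change u * (v ^ 3 * w ^ 0) = v ^ 0 * w ^ 1 * u ^ 2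
    rw [pow_zero, mul_one, pow_zero, one_mul, pow_one, h.cube_right, h.left_mul_right_inv,
      h.sq_left]
  · change u * (v ^ 3 * w ^ 1) = v ^ 1 * w ^ 7 * u ^ 1
    rw [pow_one, pow_one, pow_one, h.cube_right, h.left_mul_inv_mul_reverser]

lemma left_mul_normalForm (e : Fin 4) (c : Fin 24) (k : Fin 3) :
    let t := leftMulTable e (Fin.ofNat 2 c)
    u * (v ^ (e : ℕ) * w ^ (c : ℕ) * u ^ (k : ℕ)) =
      v ^ (t.1 : ℕ) * w ^ ((c + t.2.1 : Fin 24) : ℕ) * u ^ ((k + t.2.2 : Fin 3) : ℕ) := by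
  intro t
  let ε := Fin.ofNat 2 c
  have hc : w ^ (c : ℕ) = w ^ (ε : ℕ) * w ^ (2 * (c / 2 : ℕ)) := by
    rw [← pow_add]; exact congrArg _ (Nat.mod_add_div _ _).symm
  have hcu : Commute (u ^ (t.2.2 : ℕ)) (w ^ (2 * (c / 2 : ℕ))) := by
    rw [pow_mul]; exact (h.commute_reverser_sq_left.pow_pow _ _).symm
  calc u * (v ^ (e : ℕ) * w ^ (c : ℕ) * u ^ (k : ℕ))
      = (u * (v ^ (e : ℕ) * w ^ (ε : ℕ))) * w ^ (2 * (c / 2 : ℕ)) * u ^ (k : ℕ) := by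
        rw [hc]; simp only [mul_assoc]
    _ = v ^ (t.1 : ℕ) * w ^ (ε + t.2.1 : ℕ) * (u ^ (t.2.2 : ℕ) * w ^ (2 * (c / 2 : ℕ)))
          * u ^ (k : ℕ) := by
        rw [h.left_mul_pow_mul_pow]; simp only [mul_assoc]; rfl
    _ = v ^ (t.1 : ℕ) * (w ^ (ε : ℕ) * (w ^ (t.2.1 : ℕ) * w ^ (2 * (c / 2 : ℕ))))
          * (u ^ (t.2.2 : ℕ) * u ^ (k : ℕ)) := by
        rw [hcu.eq, pow_add]; simp only [mul_assoc]
    _ = v ^ (t.1 : ℕ) * (w ^ (c : ℕ) * w ^ (t.2.1 : ℕ)) * (u ^ (k : ℕ) * u ^ (t.2.2 : ℕ)) := by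
        rw [pow_mul_comm w, pow_mul_comm u, hc, mul_assoc (w ^ _)]
    _ = _ := by rw [pow_val_add h.reverser_pow, pow_val_add h.pow_three]

end IsG10Triple

/-! ### Tracing words through a coset table -/

section EdgeTracing

variable {α ι G X : Type*} [Group G] [MulAction G X]

/-- The edge `(a, i)` of the table `step` is correct: the generator `g a` takes the point labelled
`i` to the point labelled `step a i`. -/
def EdgeHolds (g : α → G) (p : ι → X) (step : α → ι → ι) (edge : α × ι) : Prop :=
  g edge.1 • p edge.2 = p (step edge.1 edge.2)

/-- The edges traversed from the node `i` by a word acting on the left, so that its last letter is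
the first to act. -/
def traceEdges (step : α → ι → ι) : List α → ι → List (α × ι)
  | [], _ => []
  | a :: l, i => (a, l.foldr step i) :: traceEdges step l i

variable {g : α → G} {p : ι → X} {step : α → ι → ι}

lemma prod_map_smul_of_edgeHolds {l : List α} {i : ι}
    (h : ∀ edge ∈ traceEdges step l i, EdgeHolds g p step edge) :
    (l.map g).prod • p i = p (l.foldr step i) := by
  induction l with
  | nil => simp
  | cons a l ih =>
    obtain ⟨ha, hl⟩ := List.forall_mem_cons.mp h
    rw [List.map_cons, List.prod_cons, mul_smul, ih hl]
    exact ha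

/-- The deduction step of a Todd–Coxeter scan: `l₁ a l₂` traces a loop at `i` in which the
distinguished occurrence of `a` traverses `edge`, and all other edges have lower rank. -/
abbrev IsGap (step : α → ι → ι) (rank : α × ι → ℕ) (l₁ l₂ : List α) (i : ι) (edge : α × ι) :
    Prop :=
  l₂.foldr step i = edge.2 ∧ l₁.foldr step (step edge.1 edge.2) = i ∧
    ∀ edge' ∈ traceEdges step l₁ (step edge.1 edge.2) ++ traceEdges step l₂ i,
      rank edge' < rank edge

lemma IsGap.edgeHolds {rank : α × ι → ℕ} {l₁ l₂ : List α} {i : ι} {edge : α × ι}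
    (hgap : IsGap step rank l₁ l₂ i edge)
    (hlower : ∀ edge', rank edge' < rank edge → EdgeHolds g p step edge')
    (hloop : ((l₁ ++ edge.1 :: l₂).map g).prod • p i = p i) : EdgeHolds g p step edge := by
  obtain ⟨hstart, hend, hrank⟩ := hgap
  obtain ⟨h₁, h₂⟩ := List.forall_mem_append.mp fun edge' hmem => hlower edge' (hrank edge' hmem)
  have hprod₁ := prod_map_smul_of_edgeHolds h₁
  have hprod₂ := prod_map_smul_of_edgeHolds h₂
  rw [hend] at hprod₁
  rw [List.map_append, List.map_cons, List.prod_append, List.prod_cons, mul_smul, mul_smul,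
    hprod₂, hstart, ← hprod₁] at hloop
  exact smul_left_cancel _ hloop

lemma edgeHolds_of_rank (rank : α × ι → ℕ)
    (h : ∀ edge, (∀ edge', rank edge' < rank edge → EdgeHolds g p step edge') →
      EdgeHolds g p step edge) (edge : α × ι) : EdgeHolds g p step edge :=
  (measure rank).wf.induction edge h

end EdgeTracing

/-! ### The coset enumeration for `Π` -/

/-- The generators of `G`, indexed by letters. -/
def gen : CSgen → CS
  | .u => gu
  | .v => gv
  | .b => gb

lemma closure_range_gen : Subgroup.closure (Set.range gen) = ⊤ := by
  have hgen : gen = PresentedGroup.of := by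
    funext a
    cases a <;> rfl
  rw [hgen, PresentedGroup.closure_range_of]

/-- The element `w = uv⁻¹u` of the normal form `v ^ e w ^ c u ^ k` in the subgroup `⟨u, v⟩`. -/
def gw : CS := gu * gv⁻¹ * gu

lemma isG10Triple_gw : IsG10Triple gu gv gw where
  pow_three := PresentedGroup.one_of_mem (rels := csRels) (x := FreeGroup.of CSgen.u ^ 3)
    (by simp [csRels])
  pow_four := PresentedGroup.one_of_mem (rels := csRels) (x := FreeGroup.of CSgen.v ^ 4)
    (by simp [csRels])
  braid := by
    have : (gu * gv) ^ 2 * ((gv * gu) ^ 2)⁻¹ = 1 := PresentedGroup.one_of_mem (rels := csRels)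
      (x := (.of CSgen.u * .of CSgen.v) ^ 2 * ((.of CSgen.v * .of CSgen.u) ^ 2)⁻¹)
      (by simp [csRels])
    simpa only [pow_two, mul_assoc] using mul_inv_eq_one.mp this
  reverser_eq := rfl

lemma gb_pow_three : gb ^ 3 = 1 :=
  PresentedGroup.one_of_mem (rels := csRels) (x := FreeGroup.of CSgen.b ^ 3) (by simp [csRels])

lemma commute_gb_gv : Commute gb gv := by
  have : gv * gb * (gb * gv)⁻¹ = 1 := PresentedGroup.one_of_mem (rels := csRels)
    (x := .of CSgen.v * .of CSgen.b * (.of CSgen.b * .of CSgen.v)⁻¹) (by simp [csRels])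
  exact (mul_inv_eq_one.mp this).symm

lemma gb_gu_gv_pow_three : (gb * gu * gv) ^ 3 = 1 :=
  PresentedGroup.one_of_mem (rels := csRels)
    (x := (.of CSgen.b * .of CSgen.u * .of CSgen.v) ^ 3) (by simp [csRels])

lemma gb_gu_gv_gu_sq_mul_gv : (gb * gu * gv * gu) ^ 2 * gv = 1 :=
  PresentedGroup.one_of_mem (rels := csRels)
    (x := (.of CSgen.b * .of CSgen.u * .of CSgen.v * .of CSgen.u) ^ 2 * .of CSgen.v)
    (by simp [csRels])

/-- The exponents `(e, c, k, s)` of a candidate coset representative `v ^ e w ^ c u ^ k b ^ s`. -/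
abbrev Node : Type := Fin 4 × Fin 24 × Fin 3 × Fin 3

/-- The candidate representative of a coset of `Π` labelled by a node. -/
def rep : Node → CS
  | (e, c, k, s) => gv ^ (e : ℕ) * gw ^ (c : ℕ) * gu ^ (k : ℕ) * gb ^ (s : ℕ)

/-- The left coset of `Π` labelled by a node. -/
def repCoset (n : Node) : CS ⧸ PiGrp := rep n

/-- The label of the trivial coset. -/
def baseNode : Node := (0, 0, 0, 0)

/-- The images under `b` of the nodes `(0, c, k, s)`, listed by `tableIndex` and encoded as
`216 * e + tableIndex (c, k, s)`. They come from a Todd–Coxeter enumeration; since `b` commutes with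
`v`, the nodes with `e = 0` suffice. -/
def bTable : List ℕ :=
  [1, 2, 0, 546, 729, 354, 550, 374, 43, 844, 759, 139, 482, 664, 773, 549, 483, 624, 561, 780, 136,
   604, 119, 593, 813, 242, 788, 825, 816, 400, 755, 778, 678, 682, 531, 608, 442, 3, 222, 828, 625,
   61, 613, 275, 84, 785, 398, 639, 167, 389, 620, 661, 436, 7, 308, 306, 307, 343, 790, 656, 128,
   359, 581, 454, 774, 735, 278, 573, 169, 515, 535, 833, 73, 74, 72, 618, 801, 426, 622, 230, 115,
   700, 831, 211, 554, 736, 845, 621, 555, 480, 633, 852, 208, 460, 191, 449, 669, 314, 860, 681,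
   672, 256, 827, 850, 750, 754, 603, 464, 514, 75, 294, 684, 481, 133, 469, 347, 156, 857, 254,
   495, 23, 245, 476, 733, 508, 79, 380, 378, 379, 415, 862, 728, 200, 431, 437, 526, 846, 807, 350,
   645, 25, 587, 607, 689, 145, 146, 144, 474, 657, 282, 478, 302, 187, 772, 687, 67, 626, 808, 701,
   477, 627, 552, 489, 708, 64, 532, 47, 521, 741, 386, 716, 753, 744, 328, 683, 706, 822, 826, 459,
   536, 586, 147, 366, 756, 553, 205, 541, 419, 12, 713, 326, 567, 95, 317, 548, 805, 580, 151, 236,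
   234, 235, 271, 718, 800, 56, 287, 509, 598, 702, 663, 422, 501, 97, 443, 463, 761]

/-- The round of the enumeration in which the corresponding entry of `bTable` is deduced. -/
def rankTable : List ℕ :=
  [0, 0, 0, 16, 16, 15, 15, 15, 15, 17, 16, 17, 14, 15, 15, 1, 1, 3, 15, 5, 13, 15, 14, 17, 16, 14,
   15, 17, 15, 17, 14, 10, 15, 2, 3, 4, 16, 16, 14, 1, 3, 15, 16, 14, 17, 6, 14, 7, 15, 15, 15, 14,
   16, 14, 12, 7, 13, 12, 12, 15, 14, 16, 15, 15, 16, 5, 16, 16, 17, 4, 14, 15, 6, 12, 13, 1, 5, 11,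
   12, 13, 7, 4, 3, 13, 17, 15, 17, 0, 7, 13, 16, 11, 16, 15, 15, 13, 16, 7, 13, 0, 16, 13, 15, 14,
   17, 8, 9, 14, 16, 11, 15, 15, 9, 15, 4, 15, 13, 15, 14, 5, 15, 16, 15, 16, 11, 16, 17, 13, 17,
   16, 17, 15, 4, 15, 16, 6, 14, 16, 14, 16, 16, 16, 13, 16, 14, 17, 16, 16, 16, 16, 15, 17, 13, 10,
   14, 14, 4, 14, 5, 17, 16, 16, 2, 17, 15, 4, 16, 16, 0, 14, 16, 1, 11, 14, 2, 4, 3, 16, 17, 17,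
   15, 16, 5, 16, 15, 14, 10, 15, 14, 6, 15, 16, 12, 12, 14, 16, 16, 16, 1, 1, 1, 15, 15, 16, 14,
   13, 14, 17, 15, 16, 13, 14, 12, 16, 16, 14]

/-- The position in `bTable` and `rankTable` of the nodes `(e, c, k, s)`. -/
def tableIndex : Fin 24 × Fin 3 × Fin 3 → ℕ
  | (c, k, s) => (c * 3 + k) * 3 + s

/-- Decoding of the entries of `bTable`; `Fin.ofNat` reduces the quotients to mixed-radix digits. -/
def decodeNode (m : ℕ) : Node :=
  (Fin.ofNat 4 (m / 216), Fin.ofNat 24 (m / 9), Fin.ofNat 3 (m / 3), Fin.ofNat 3 m)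

/-- The effect of `v ^ e` on nodes. -/
def rotate (e : Fin 4) (n : Node) : Node := (e + n.1, n.2)

/-- The coset table: the effect of each generator on nodes. -/
def nodeStep : CSgen → Node → Node
  | .u, (e, c, k, s) =>
    let t := leftMulTable e (Fin.ofNat 2 c)
    (t.1, c + t.2.1, k + t.2.2, s)
  | .v, n => rotate 1 n
  | .b, (e, m) => rotate e (decodeNode (bTable.getD (tableIndex m) 0))

/-- The order in which edges of the coset table are deduced. Those of `u` and `v` come from the
normal form in `⟨u, v⟩`. -/
def edgeRank : CSgen × Node → ℕ
  | (.b, (_, m)) => rankTable.getD (tableIndex m) 0 + 1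
  | _ => 0

lemma repCoset_rotate (e : Fin 4) (n : Node) :
    repCoset (rotate e n) = gv ^ (e : ℕ) • repCoset n := by
  refine congrArg (QuotientGroup.mk (s := PiGrp)) ?_
  simp only [rotate, rep, pow_val_add isG10Triple_gw.pow_four, smul_eq_mul, mul_assoc]

lemma edgeHolds_u (n : Node) : EdgeHolds gen repCoset nodeStep (.u, n) := by
  obtain ⟨e, c, k, s⟩ := n
  refine congrArg (QuotientGroup.mk (s := PiGrp)) ?_
  change gu * (gv ^ (e : ℕ) * gw ^ (c : ℕ) * gu ^ (k : ℕ) * gb ^ (s : ℕ)) = _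
  rw [← mul_assoc, isG10Triple_gw.left_mul_normalForm]
  rfl

lemma edgeHolds_v (n : Node) : EdgeHolds gen repCoset nodeStep (.v, n) :=
  (pow_one gv ▸ repCoset_rotate 1 n).symm

lemma edgeHolds_b_rotate (e e' : Fin 4) (m : Fin 24 × Fin 3 × Fin 3) :
    EdgeHolds gen repCoset nodeStep (.b, (e, m)) ↔
      EdgeHolds gen repCoset nodeStep (.b, (e', m)) := by
  suffices h : ∀ e, EdgeHolds gen repCoset nodeStep (.b, (e, m)) ↔
      gb • repCoset (0, m) = repCoset (decodeNode (bTable.getD (tableIndex m) 0)) from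
    (h e).trans (h e').symm
  intro e
  have he : (e, m) = rotate e (0, m) := by simp [rotate]
  change gb • repCoset (e, m) = repCoset (rotate e _) ↔ _
  rw [he, repCoset_rotate, repCoset_rotate, smul_smul, (commute_gb_gv.pow_right _).eq, mul_smul,
    smul_left_cancel_iff]

lemma edgeHolds_b_base (e : Fin 4) (s : Fin 3) :
    EdgeHolds gen repCoset nodeStep (.b, (e, 0, 0, s)) := by
  rw [edgeHolds_b_rotate e 0]
  have step_eq : ∀ s, nodeStep .b (0, 0, 0, s) = (0, 0, 0, 1 + s) := by decide +kernel
  rw [EdgeHolds, step_eq]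
  refine congrArg (QuotientGroup.mk (s := PiGrp)) ?_
  change gb * rep (0, 0, 0, s) = rep (0, 0, 0, 1 + s)
  simp [rep, pow_val_add gb_pow_three]

/-- A positive word for `j ^ n`. -/
def jWord (n : ℕ) : List CSgen := (List.replicate n [.u, .v, .u, .v]).flatten

lemma prod_map_gen_jWord (n : ℕ) : ((jWord n).map gen).prod = gj ^ n := by
  simp [jWord, gj, gen, pow_two, List.map_flatten, List.prod_flatten, mul_assoc]

/-- Positive words `l₁ b l₂` for `a₁`, `a₂` and `a₃`, split at the letter `b`. -/
def generatorWords : List (List CSgen × List CSgen) :=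
  [([.v, .u, .v, .v, .v] ++ jWord 4, [.u, .v] ++ jWord 2),
    ([.v, .v, .u], [.u, .v, .v, .v, .u, .v, .v] ++ jWord 1),
    ([.u, .u, .v, .v, .u] ++ jWord 9, [.v, .v, .v, .u, .v, .v, .v] ++ jWord 8)]

lemma prod_map_gen_mem_PiGrp :
    ∀ w ∈ generatorWords, ((w.1 ++ .b :: w.2).map gen).prod ∈ PiGrp := by
  have hu : gu⁻¹ = gu * gu := by rw [← isG10Triple_gw.sq_left, pow_two]
  have hv : gv⁻¹ = gv * gv * gv := by rw [← isG10Triple_gw.cube_right, pow_succ, pow_two]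
  simp only [generatorWords, List.forall_mem_cons, List.map_append, List.map_cons, List.map_nil,
    List.prod_append, List.prod_cons, List.prod_nil, prod_map_gen_jWord, gen]
  refine ⟨?_, ?_, ?_, by simp⟩
  · convert a1_mem using 1
    simp only [a1, hv, mul_assoc, mul_one]
  · convert a2_mem using 1
    simp only [a2, hv, pow_two, pow_one, mul_assoc, mul_one]
  · convert a3_mem using 1
    simp only [a3, hu, hv, pow_two, mul_assoc, mul_one]

/-- The words `l` for which `b l` is one of the relators `b³`, `(buv)³` and `(buvu)²v`. -/
def relatorTails : List (List CSgen) :=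
  [[.b, .b], [.u, .v, .b, .u, .v, .b, .u, .v], [.u, .v, .u, .b, .u, .v, .u, .v]]

lemma prod_map_gen_relator : ∀ w ∈ relatorTails, ((.b :: w).map gen).prod = 1 := by
  simp only [relatorTails, List.forall_mem_cons, List.map_cons, List.map_nil, List.prod_cons,
    List.prod_nil, gen, mul_one]
  refine ⟨?_, ?_, ?_, by simp⟩
  · rw [← gb_pow_three, pow_succ, pow_two, mul_assoc]
  · rw [← gb_gu_gv_pow_three]
    simp only [pow_succ, pow_zero, one_mul, mul_assoc]
  · rw [← gb_gu_gv_gu_sq_mul_gv]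
    simp only [pow_two, mul_assoc]

lemma smul_repCoset_baseNode {g : CS} (hg : g ∈ PiGrp) :
    g • repCoset baseNode = repCoset baseNode := by
  have : repCoset baseNode = ((1 : CS) : CS ⧸ PiGrp) := by simp [repCoset, baseNode, rep]
  rwa [this, ← mem_stabilizer_iff, stabilizer_quotient]

/-- Ranks and tables are compatible with `rotate`, so it suffices to deduce one edge from each class
modulo rotation. -/
lemma exists_isGap_of_ne_base : ∀ c k s, (c, k) ≠ (0, 0) → ∃ e,
    (∃ w ∈ generatorWords, IsGap nodeStep edgeRank w.1 w.2 baseNode (.b, (e, c, k, s))) ∨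
      ∃ w ∈ relatorTails, IsGap nodeStep edgeRank [] w (nodeStep .b (e, c, k, s))
        (.b, (e, c, k, s)) := by
  decide +kernel

lemma edgeHolds (edge : CSgen × Node) : EdgeHolds gen repCoset nodeStep edge := by
  refine edgeHolds_of_rank edgeRank (fun edge ih => ?_) edge
  match edge with
  | (.u, n) => exact edgeHolds_u n
  | (.v, n) => exact edgeHolds_v n
  | (.b, (e, c, k, s)) =>
    by_cases hbase : (c, k) = (0, 0)
    · obtain ⟨rfl, rfl⟩ := Prod.mk.inj hbase
      exact edgeHolds_b_base e s
    · obtain ⟨e', ⟨w, hw, hgap⟩ | ⟨w, hw, hgap⟩⟩ := exists_isGap_of_ne_base c k s hbase <;>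
        rw [edgeHolds_b_rotate e e'] <;>
        refine hgap.edgeHolds ih ?_
      · exact smul_repCoset_baseNode (prod_map_gen_mem_PiGrp w hw)
      · rw [List.nil_append, prod_map_gen_relator w hw, one_smul]

lemma range_repCoset : Set.range repCoset = Set.univ := by
  refine eq_univ_of_mapsTo_smul closure_range_gen (Set.finite_range _) ⟨_, baseNode, rfl⟩ ?_
  rintro _ ⟨a, rfl⟩ _ ⟨n, rfl⟩
  exact ⟨nodeStep a n, (edgeHolds (a, n)).symm⟩

/-! ### The finite quotient -/

/-- A function of finite order as a permutation; giving the inverse as an iterate keeps it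
computable in the kernel. -/
def permOfIterate {X : Type*} (f : X → X) (n : ℕ) (h : ∀ x, f^[n + 1] x = x) : Equiv.Perm X where
  toFun := f
  invFun := f^[n]
  left_inv := h
  right_inv x := by rw [← Function.iterate_succ_apply' f n x, h]

/-- The action of `u` on the 28 isotropic points `0, …, 27` of the hermitian plane over `𝔽₉` and on
the three elements `28, 29, 30` of the abelianization of `G`. -/
def uPerm : Equiv.Perm (Fin 31) :=
  permOfIterate ![19, 3, 4, 22, 24, 21, 11, 14, 13, 27, 6, 10, 16, 18, 15, 7, 26, 5, 8, 25, 9, 17,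
    1, 23, 2, 0, 12, 20, 29, 30, 28] 2 (by decide +kernel)

/-- The action of `v` on the points of `uPerm`. -/
def vPerm : Equiv.Perm (Fin 31) :=
  permOfIterate ![1, 10, 17, 3, 27, 5, 2, 0, 18, 11, 7, 26, 20, 8, 9, 6, 22, 15, 23, 12, 21, 19,
    4, 13, 24, 25, 14, 16, 28, 29, 30] 3 (by decide +kernel)

/-- The action of `b` on the points of `uPerm`. -/
def bPerm : Equiv.Perm (Fin 31) :=
  permOfIterate ![11, 26, 23, 25, 2, 3, 18, 9, 16, 19, 14, 12, 0, 27, 21, 8, 15, 13, 22, 7, 1, 10,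
    6, 4, 24, 5, 20, 17, 29, 30, 28] 2 (by decide +kernel)

/-- The permutations by which the generators of `G` act. -/
def genPerm : CSgen → Equiv.Perm (Fin 31)
  | .u => uPerm
  | .v => vPerm
  | .b => bPerm

lemma lift_genPerm_eq_one : ∀ r ∈ csRels, FreeGroup.lift genPerm r = 1 := by
  rintro r (rfl | rfl | rfl | rfl | rfl | rfl | rfl) <;>
    simp only [map_mul, map_pow, map_inv, FreeGroup.lift_apply_of, genPerm] <;> decide +kernel

/-- The finite quotient of `G` given by its action on isotropic points and abelianization. -/
def permHom : CS →* Equiv.Perm (Fin 31) := PresentedGroup.toGroup lift_genPerm_eq_one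

/-- A set of points whose stabilizer has preimage `Π`: seven isotropic points forming an orbit of
`Π`, and one element of the abelianization. -/
def piBlock : Finset (Fin 31) := {0, 1, 2, 3, 4, 5, 6, 28}

/-- The subgroup of `G` preserving `piBlock`. -/
def piBlockStabilizer : Subgroup CS := (stabilizer _ (piBlock : Set (Fin 31))).comap permHom

lemma mem_piBlockStabilizer_iff {g : CS} :
    g ∈ piBlockStabilizer ↔ ∀ x ∈ piBlock, permHom g x ∈ piBlock :=
  (mem_stabilizer_set_iff_smul_set_subset piBlock.finite_toSet).trans Set.image_subset_iff

lemma PiGrp_le_piBlockStabilizer : PiGrp ≤ piBlockStabilizer := by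
  rw [PiGrp, Subgroup.closure_le]
  rintro _ (rfl | rfl | rfl) <;> rw [SetLike.mem_coe, mem_piBlockStabilizer_iff] <;> decide +kernel

lemma eq_baseNode_of_rep_mem :
    ∀ n, (∀ x ∈ piBlock, permHom (rep n) x ∈ piBlock) → n = baseNode := by
  decide +kernel

lemma PiGrp_eq_piBlockStabilizer : PiGrp = piBlockStabilizer := by
  refine PiGrp_le_piBlockStabilizer.antisymm
    (le_of_forall_rep_mem PiGrp_le_piBlockStabilizer range_repCoset fun n hn => ?_)
  rw [eq_baseNode_of_rep_mem n (mem_piBlockStabilizer_iff.mp hn)]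
  simp [rep, baseNode]

lemma ker_permHom_le_normalCore : permHom.ker ≤ PiGrp.normalCore := by
  rw [Subgroup.normal_le_normalCore, PiGrp_eq_piBlockStabilizer]
  exact Subgroup.ker_le_comap _ _

lemma G0_le_centralizer_gv : G0 ≤ Subgroup.centralizer {gv} := by
  have hj : Commute gj gv := by
    have := isG10Triple_gw.commute_reverser_sq_right
    rwa [isG10Triple_gw.reverser_sq, ← isG10Triple_gw.braid, Commute.inv_left_iff,
      mul_assoc _ gu gv, ← pow_two] at this
  rw [G0, Subgroup.closure_le]
  rintro _ (rfl | rfl | rfl | rfl) <;> rw [SetLike.mem_coe, Subgroup.mem_centralizer_singleton_iff]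
  · exact (hj.mul_left commute_gb_gv).inv_left.eq
  · exact commute_gb_gv.eq
  · exact hj.eq

lemma permHom_mem_of_mem_PiGrp {g : CS} (hg : g ∈ PiGrp) :
    ∃ (i : Fin 7) (k : Fin 3), permHom g = permHom a2 ^ (i : ℕ) * permHom a1 ^ (k : ℕ) := by
  have ha3 : permHom a3 = (permHom a2)⁻¹ := by decide +kernel
  refine exists_eq_pow_mul_pow_of_mem_closure (r := 2) (by decide +kernel) (by decide +kernel)
    (by unfold SemiconjBy; decide +kernel) ?_
  have : PiGrp ≤ (Subgroup.closure {permHom a2, permHom a1}).comap permHom := by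
    rw [PiGrp, Subgroup.closure_le]
    rintro _ (rfl | rfl | rfl)
    · exact Subgroup.subset_closure (by simp)
    · exact Subgroup.subset_closure (by simp)
    · rw [SetLike.mem_coe, Subgroup.mem_comap, ha3]
      exact inv_mem (Subgroup.subset_closure (by simp))
  exact this hg

lemma PiGrp_inf_G0_le_ker : PiGrp ⊓ G0 ≤ permHom.ker := by
  have eq_one_of_commute : ∀ (i : Fin 7) (k : Fin 3),
      Commute (permHom a2 ^ (i : ℕ) * permHom a1 ^ (k : ℕ)) (permHom gv) →
        permHom a2 ^ (i : ℕ) * permHom a1 ^ (k : ℕ) = 1 := by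
    unfold Commute SemiconjBy
    decide +kernel
  rintro g ⟨hgPi, hgG0⟩
  obtain ⟨i, k, hg⟩ := permHom_mem_of_mem_PiGrp hgPi
  have hcomm : Commute g gv := Subgroup.mem_centralizer_singleton_iff.mp (G0_le_centralizer_gv hgG0)
  rw [MonoidHom.mem_ker, hg]
  exact eq_one_of_commute i k (hg ▸ hcomm.map permHom)

/-- for every `h ∈ G`, `h(Π ∩ G₀)h⁻¹ ⊆ Π`; in particular
`h(Π ∩ G₀)h⁻¹ = Π ∩ G₀` for every `h ∈ G₀`. -/
theorem stmt_15 :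
    (∀ h : CS, Subgroup.map (MulAut.conj h).toMonoidHom (PiGrp ⊓ G0) ≤ PiGrp) ∧
    (∀ h ∈ G0, Subgroup.map (MulAut.conj h).toMonoidHom (PiGrp ⊓ G0) = PiGrp ⊓ G0) := by
  have hcore : PiGrp ⊓ G0 ≤ PiGrp.normalCore := PiGrp_inf_G0_le_ker.trans ker_permHom_le_normalCore
  exact ⟨map_conj_le_of_le_normalCore hcore, fun h => map_conj_inf_eq_of_le_normalCore hcore⟩
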